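/- For every even integer m ≥ 2, one has 2·( binomial(2m+3, m+1) + 1 − (m+2)² ) − 2^{m/2} > (2m − 1)·2^m. -/

import Mathlib

theorem choose_step (m : ℕ) :
    3 * (2 * m + 3).choose (m + 1) ≤ (2 * (m + 1) + 3).choose (m + 1 + 1) := by
  have e : 2 * (m + 1) + 3 = (2 * m + 3) + 1 + 1 := by ring
  have s : (2 * m + 3).choose (m + 1 + 1) = (2 * m + 3).choose (m + 1) :=
    Nat.choose_symm_of_eq_add (by ring)
  rw [e, Nat.choose_succ_succ' (2 * m + 3 + 1) (m + 1), Nat.choose_succ_succ' (2 * m + 3) m,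
    Nat.choose_succ_succ' (2 * m + 3) (m + 1), s]
  omega

theorem choose_bound (m : ℕ) (hm2 : 2 ≤ m) :
    m * 2 ^ m + (m + 2) ^ 2 ≤ (2 * m + 3).choose (m + 1) := by
  induction m, hm2 using Nat.le_induction with
  | base => decide
  | succ m hm ih =>
    have h := choose_step m
    have h2 : 2 * 2 ^ m ≤ m * 2 ^ m := Nat.mul_le_mul_right _ hm
    rw [pow_succ 2 m]
    nlinarith

/-- For every even `m ≥ 2`, `2(binom(2m+3, m+1) + 1 − (m+2)²) − 2^{m/2} > (2m−1)·2^m`: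
the Calabi-Yau hypersurfaces carry more linearly independent Rarita-Schwinger fields
than flat tori of the same real dimension `2m`. -/
theorem calabi_yau_beats_torus (m : ℕ) (hm : Even m) (hm2 : 2 ≤ m) :
    2 * (((2 * m + 3).choose (m + 1) : ℤ) + 1 - ((m : ℤ) + 2) ^ 2) - 2 ^ (m / 2) >
      (2 * (m : ℤ) - 1) * 2 ^ m := by
  have h : (m : ℤ) * 2 ^ m + ((m : ℤ) + 2) ^ 2 ≤ ((2 * m + 3).choose (m + 1) : ℤ) := by
    exact_mod_cast choose_bound m hm2
  have h2 : (2 : ℤ) ^ (m / 2) ≤ 2 ^ m :=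
    pow_le_pow_right₀ (by norm_num) (Nat.div_le_self m 2)
  linarith
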